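/- Consider fractal percolation in [0,1]^d with subdivision parameter n ≥ 2 and retention probability p > 1/n^d. Then, conditioned on the limit set F being nonempty, almost surely F cannot be embedded in any lower-dimensional Euclidean space via a bi-Lipschitz map: there is no bi-Lipschitz map φ : F → ℝ^{d−1}. -/

import Mathlib

/-!
The obstruction is a count of separated points. For every `m`, almost every percolation with
nonempty limit set has, below some retained cube of side `r`, a complete pattern: all
`n ^ (d m)` subcubes of relative level `m` contain a point of the limit set, and the points can be
kept at mutual distance at least `r n ^ (-m-1)` by taking each in the lowest cube of the following
level. A bi-Lipschitz map would send them to `n ^ (d m)` points of `ℝ^(d-1)` with comparable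
separation and diameter `O(r)`. There is room for only `O(n ^ ((d-1) m))` such points, which is
a contradiction for large `m` (`no_embedding_of_good`).

The complete patterns come from the branching structure. The subtrees at the children of the
root are independent copies of the whole tree, independent of the root decision (`map_glue`).
With `N = n ^ d` the survival probability `u` satisfies `1 - u = (1 - p u) ^ N`, and `u > 0`
because `N p > 1` (`prob_surv_pos`). Containing a complete pattern passes from a retained child
to its parent, so its probability `t` satisfies `1 - t ≤ (1 - p t) ^ N`; moreover `0 < t ≤ u`.
Strict convexity then gives `t = u`, so survival without a complete pattern has probability
zero (`prob_surv_not_good`). Finally, survival of the tree is equivalent to nonemptiness of the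
limit set by compactness (`exists_mem_percLimit`).
-/

open Metric Set Filter MeasureTheory
open scoped ENNReal Topology

/-- `N_r(F)`: the smallest number of sets of diameter at most `r` needed to cover `F`
(`∞` if there is no finite cover). -/
noncomputable def coverNumber {X : Type*} [PseudoMetricSpace X] (r : ℝ) (F : Set X) : ℝ≥0∞ :=
  ⨅ (𝒰 : Finset (Set X)) (_ : (∀ U ∈ 𝒰, Metric.diam U ≤ r) ∧ F ⊆ ⋃₀ ↑𝒰), (𝒰.card : ℝ≥0∞)

/-- The Assouad dimension of a set `F` in a metric space. -/
noncomputable def assouadDim {X : Type*} [PseudoMetricSpace X] (F : Set X) : ℝ :=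
  sInf {α : ℝ | 0 ≤ α ∧ ∃ C > 0, ∃ ρ > 0, ∀ R : ℝ, 0 < R → R ≤ ρ → ∀ r : ℝ, 0 < r → r < R →
    ∀ x ∈ F, coverNumber r (Metric.closedBall x R ∩ F) ≤ ENNReal.ofReal (C * (R / r) ^ α)}

/-- The unit cube `[0,1]^d` in `ℝ^d`. -/
def unitCube (d : ℕ) : Set (EuclideanSpace ℝ (Fin d)) :=
  {x | ∀ i, x i ∈ Set.Icc (0 : ℝ) 1}

/-- The closed subcube of `[0,1]^d` of side `n^{-|w|}` addressed by the word `w`, whose letters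
pick one of the `n^d` subcubes (a digit in each coordinate) at each level of subdivision. -/
def percCube (n d : ℕ) (w : List (Fin d → Fin n)) : Set (EuclideanSpace ℝ (Fin d)) :=
  {x | ∀ i : Fin d,
    x i ∈ Set.Icc (∑ l : Fin w.length, ((w.get l) i : ℝ) * (n : ℝ) ^ (-(l.1 : ℤ) - 1))
      ((∑ l : Fin w.length, ((w.get l) i : ℝ) * (n : ℝ) ^ (-(l.1 : ℤ) - 1)) +
        (n : ℝ) ^ (-(w.length : ℤ)))}

/-- Given the family `ω` of retention decisions (one Boolean per address), the cube addressed
by `w` is retained iff every nonempty prefix of `w` was retained. -/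
def retained {A : Type*} (ω : List A → Bool) (w : List A) : Prop :=
  ∀ k : ℕ, 0 < k → k ≤ w.length → ω (w.take k) = true

/-- The fractal percolation limit set `F = ⋂_k Q_k`, where `Q_k` is the union of the retained
cubes of side `n^{-k}`. -/
def percLimit (n d : ℕ) (ω : List (Fin d → Fin n) → Bool) : Set (EuclideanSpace ℝ (Fin d)) :=
  ⋂ k : ℕ, ⋃ w : {w : List (Fin d → Fin n) // w.length = k ∧ retained ω w}, percCube n d w.1


/-! ### Words and subtrees -/

section Tree

variable {A : Type*}

/-- The retention decisions seen from the vertex `w`: the percolation inside the cube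
addressed by `w`. -/
def subTree (w : List A) (ω : List A → Bool) : List A → Bool := fun v => ω (w ++ v)

/-- Some vertex at depth `k` is retained. -/
def SurvTo (k : ℕ) (ω : List A → Bool) : Prop := ∃ w : List A, w.length = k ∧ retained ω w

/-- Retained vertices exist at every depth. The decision at the root plays no role. -/
def Surv (ω : List A → Bool) : Prop := ∀ k, SurvTo k ω

/-- Every word `v ++ [z]` with `v` of length `m` is retained and has a surviving subtree.
Prescribing the last letter `z` keeps the corresponding cubes apart from each other. -/
def Full (z : A) : ℕ → (List A → Bool) → Prop
  | 0, ω => ω [z] = true ∧ Surv (subTree [z] ω)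
  | m + 1, ω => ∀ a, ω [a] = true ∧ Full z m (subTree [a] ω)

/-- The tree survives, and `Full z m` holds below some retained vertex. -/
def Good (z : A) (m : ℕ) (ω : List A → Bool) : Prop :=
  Surv ω ∧ ∃ w, retained ω w ∧ Full z m (subTree w ω)

lemma retained_nil (ω : List A → Bool) : retained ω [] := by
  intro k h1 h2
  simp at h2
  omega

lemma retained_cons (ω : List A → Bool) (a : A) (w : List A) :
    retained ω (a :: w) ↔ ω [a] = true ∧ retained (subTree [a] ω) w := by
  constructor
  · intro h
    refine ⟨by simpa using h 1 one_pos (by simp), fun k hk hk' => ?_⟩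
    simpa [subTree] using h (k + 1) (by omega) (by simpa using hk')
  · rintro ⟨h1, h2⟩ k hk hk'
    obtain ⟨k, rfl⟩ : ∃ j, k = j + 1 := ⟨k - 1, by omega⟩
    rcases Nat.eq_zero_or_pos k with rfl | hk0
    · simpa using h1
    · simpa [subTree] using h2 k hk0 (by simpa using hk')

lemma subTree_append (ω : List A → Bool) (w v : List A) :
    subTree (w ++ v) ω = subTree v (subTree w ω) := by
  funext u
  simp [subTree]

lemma retained_append (ω : List A → Bool) (w v : List A) :
    retained ω (w ++ v) ↔ retained ω w ∧ retained (subTree w ω) v := by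
  induction w generalizing ω with
  | nil =>
    have : subTree [] ω = ω := by funext u; simp [subTree]
    simp [retained_nil, this]
  | cons a w ih =>
    rw [List.cons_append, retained_cons, ih, retained_cons, ← subTree_append, and_assoc]
    rfl

lemma retained_take {ω : List A → Bool} {w : List A} (h : retained ω w) (k : ℕ) :
    retained ω (w.take k) := by
  have := List.take_append_drop k w
  rw [← this, retained_append] at h
  exact h.1

lemma survTo_antitone {j k : ℕ} (hjk : j ≤ k) {ω : List A → Bool} (h : SurvTo k ω) :
    SurvTo j ω := by
  obtain ⟨w, hw, hr⟩ := h
  exact ⟨w.take j, by simp [hw, hjk], retained_take hr j⟩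

lemma survTo_succ (k : ℕ) (ω : List A → Bool) :
    SurvTo (k + 1) ω ↔ ∃ a, ω [a] = true ∧ SurvTo k (subTree [a] ω) := by
  constructor
  · rintro ⟨w, hw, hr⟩
    cases w with
    | nil => simp at hw
    | cons a w =>
      rw [retained_cons] at hr
      exact ⟨a, hr.1, w, by simpa using hw, hr.2⟩
  · rintro ⟨a, ha, w, hw, hr⟩
    exact ⟨a :: w, by simp [hw], (retained_cons _ _ _).2 ⟨ha, hr⟩⟩

lemma good_of_sub (z : A) (m : ℕ) (ω : List A → Bool) (a : A) (ha : ω [a] = true)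
    (h : Good z m (subTree [a] ω)) : Good z m ω := by
  obtain ⟨hs, w, hw, hf⟩ := h
  refine ⟨fun k => survTo_antitone (Nat.le_succ k) ((survTo_succ k ω).2 ⟨a, ha, hs k⟩),
    a :: w, (retained_cons _ _ _).2 ⟨ha, hw⟩, ?_⟩
  rwa [← subTree_append] at hf

lemma Full.surv [Nonempty A] {z : A} {m : ℕ} {ω : List A → Bool} (h : Full z m ω) : Surv ω := by
  have key : ∀ (a : A) (ω : List A → Bool), ω [a] = true → Surv (subTree [a] ω) → Surv ω :=
    fun a ω ha hs k => survTo_antitone (Nat.le_succ k) ((survTo_succ k ω).2 ⟨a, ha, hs k⟩)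
  induction m generalizing ω with
  | zero => exact key z ω h.1 h.2
  | succ m ih => exact key z ω (h z).1 (ih (h z).2)

lemma Full.word {z : A} {m : ℕ} {ω : List A → Bool} (h : Full z m ω) (v : List A)
    (hv : v.length = m) : retained ω (v ++ [z]) ∧ Surv (subTree (v ++ [z]) ω) := by
  induction m generalizing ω v with
  | zero =>
    obtain rfl : v = [] := by simpa using hv
    exact ⟨(retained_cons _ _ _).2 ⟨h.1, retained_nil _⟩, h.2⟩
  | succ m ih =>
    cases v with
    | nil => simp at hv
    | cons a v =>
      have := ih (h a).2 v (by simpa using hv)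
      refine ⟨(retained_cons _ _ _).2 ⟨(h a).1, this.1⟩, ?_⟩
      rw [← subTree_append] at this
      exact this.2

/-! ### Measurability and dependence on the root -/

/-- The property does not depend on the decision at the root. -/
def RootFree (B : Set (List A → Bool)) : Prop :=
  ∀ ω ω' : List A → Bool, (∀ w, w ≠ [] → ω w = ω' w) → ω ∈ B → ω' ∈ B

lemma retained_congr {ω ω' : List A → Bool} (h : ∀ w, w ≠ [] → ω w = ω' w) {w : List A}
    (hr : retained ω w) : retained ω' w := by
  intro k hk hk'
  rw [← h]
  · exact hr k hk hk'
  · intro h0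
    have := congrArg List.length h0
    simp at this
    rcases this with h | h
    · omega
    · subst h; simp at hk'; omega

lemma rootFree_survTo (k : ℕ) : RootFree {ω : List A → Bool | SurvTo k ω} := by
  rintro ω ω' h ⟨w, hw, hr⟩
  exact ⟨w, hw, retained_congr h hr⟩

lemma rootFree_surv : RootFree {ω : List A → Bool | Surv ω} :=
  fun ω ω' h hs k => rootFree_survTo k ω ω' h (hs k)

lemma subTree_singleton_congr {ω ω' : List A → Bool} (h : ∀ w, w ≠ [] → ω w = ω' w) (a : A) :
    subTree [a] ω = subTree [a] ω' := by
  funext u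
  exact h _ (by simp)

lemma rootFree_full (z : A) (m : ℕ) : RootFree {ω : List A → Bool | Full z m ω} := by
  intro ω ω' h hf
  cases m with
  | zero =>
    refine ⟨?_, ?_⟩
    · rw [← h _ (by simp)]; exact hf.1
    · rw [← subTree_singleton_congr h]; exact hf.2
  | succ m =>
    intro a
    refine ⟨?_, ?_⟩
    · rw [← h _ (by simp)]; exact (hf a).1
    · rw [← subTree_singleton_congr h]; exact (hf a).2

lemma rootFree_good (z : A) (m : ℕ) : RootFree {ω : List A → Bool | Good z m ω} := by
  rintro ω ω' h ⟨hs, w, hw, hf⟩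
  refine ⟨rootFree_surv ω ω' h hs, w, retained_congr h hw, ?_⟩
  refine rootFree_full z m _ _ ?_ hf
  intro u hu
  exact h _ (by simp [hu])

lemma measurable_subTree (w : List A) : Measurable (subTree w) :=
  measurable_pi_lambda _ fun _ => measurable_pi_apply _

lemma measurableSet_coord (w : List A) : MeasurableSet {ω : List A → Bool | ω w = true} :=
  measurableSet_eq_fun (measurable_pi_apply w) measurable_const

lemma measurableSet_retained (w : List A) :
    MeasurableSet {ω : List A → Bool | retained ω w} := by
  simp only [retained, Set.ofPred_forall]
  exact MeasurableSet.iInter fun k => MeasurableSet.iInter fun _ => MeasurableSet.iInter fun _ =>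
    measurableSet_coord _

variable [Countable A]

lemma measurableSet_survTo (k : ℕ) : MeasurableSet {ω : List A → Bool | SurvTo k ω} := by
  simp only [SurvTo, Set.ofPred_exists]
  refine MeasurableSet.iUnion fun w => ?_
  by_cases h : w.length = k
  · simpa [h] using measurableSet_retained w
  · simp [h]

lemma measurableSet_surv : MeasurableSet {ω : List A → Bool | Surv ω} := by
  simp only [Surv, Set.ofPred_forall]
  exact MeasurableSet.iInter measurableSet_survTo

lemma measurableSet_full (z : A) (m : ℕ) : MeasurableSet {ω : List A → Bool | Full z m ω} := by
  induction m with
  | zero =>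
    exact (measurableSet_coord [z]).inter (measurable_subTree [z] measurableSet_surv)
  | succ m ih =>
    simp only [Full, Set.ofPred_forall]
    exact MeasurableSet.iInter fun a =>
      (measurableSet_coord [a]).inter (measurable_subTree [a] ih)

lemma measurableSet_good (z : A) (m : ℕ) : MeasurableSet {ω : List A → Bool | Good z m ω} := by
  have h : MeasurableSet {ω : List A → Bool | ∃ w, retained ω w ∧ Full z m (subTree w ω)} := by
    simp only [Set.ofPred_exists]
    exact MeasurableSet.iUnion fun w =>
      (measurableSet_retained w).inter (measurable_subTree w (measurableSet_full z m))
  exact measurableSet_surv.inter h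

end Tree

/-! ### The branching structure of the measure -/

section Branching

variable {A : Type*}

/-- Assemble a tree of decisions from the decision at the root and the family of the
subtrees below it. -/
def glue (x : Bool × (A → List A → Bool)) : List A → Bool
  | [] => x.1
  | a :: w => x.2 a w

lemma measurable_glue : Measurable (glue (A := A)) := by
  refine measurable_pi_lambda _ fun w => ?_
  cases w with
  | nil => exact measurable_fst
  | cons a w =>
    exact (measurable_pi_apply w).comp ((measurable_pi_apply a).comp measurable_snd)

/-- Finite measures on `List A → Bool` are determined by the finite cylinders. -/
lemma measure_ext_cylinder (μ ν : Measure (List A → Bool)) [IsFiniteMeasure μ]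
    [IsFiniteMeasure ν]
    (h : ∀ (s : Finset (List A)) (β : List A → Bool),
      μ {ω | ∀ w ∈ s, ω w = β w} = ν {ω | ∀ w ∈ s, ω w = β w}) : μ = ν := by
  classical
  refine IsProjectiveLimit.unique (P := fun I => ν.map I.restrict) ?_ (fun I => rfl)
  intro I
  refine Measure.ext_of_singleton fun β => ?_
  have hm : Measurable (I.restrict (π := fun _ : List A => Bool)) := Finset.measurable_restrict I
  rw [Measure.map_apply hm (measurableSet_singleton β),
    Measure.map_apply hm (measurableSet_singleton β)]
  have : (I.restrict (π := fun _ : List A => Bool)) ⁻¹' {β} =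
      {ω | ∀ w ∈ I, ω w = (fun w => if hw : w ∈ I then β ⟨w, hw⟩ else false) w} := by
    ext ω
    simp only [Set.mem_preimage, Set.mem_singleton_iff, Set.mem_ofPred_eq, funext_iff,
      Finset.restrict, Subtype.forall]
    refine forall_congr' fun w => forall_congr' fun hw => ?_
    simp [hw]
  rw [this, h]

variable {p : ℝ} {P : Measure (List A → Bool)} [IsProbabilityMeasure P]

/-- The root decision and the subtrees at the children of the root are independent, and
each of these subtrees again has law `P`. -/
lemma map_glue [Fintype A]
    (hP : ∀ (s : Finset (List A)) (β : List A → Bool),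
      P {ω | ∀ w ∈ s, ω w = β w} =
        ∏ w ∈ s, if β w then ENNReal.ofReal p else ENNReal.ofReal (1 - p)) :
    ((P.map fun ω => ω []).prod (Measure.pi fun _ : A => P)).map glue = P := by
  classical
  have hroot : Measurable fun ω : List A → Bool => ω [] := measurable_pi_apply _
  have : IsProbabilityMeasure (P.map fun ω => ω []) :=
    Measure.isProbabilityMeasure_map hroot.aemeasurable
  have : IsProbabilityMeasure
      (((P.map fun ω => ω []).prod (Measure.pi fun _ : A => P)).map glue) :=
    Measure.isProbabilityMeasure_map measurable_glue.aemeasurable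
  refine measure_ext_cylinder _ _ fun s β => ?_
  have hmeas : ∀ (s : Finset (List A)) (β : List A → Bool),
      MeasurableSet {ω : List A → Bool | ∀ w ∈ s, ω w = β w} := by
    intro s β
    simp only [Set.ofPred_forall]
    exact MeasurableSet.iInter fun w => MeasurableSet.iInter fun _ =>
      measurable_pi_apply w (measurableSet_singleton _)
  let c : List A → Finset (List A) → Finset (List A) := fun u s =>
    s.preimage (fun v => u ++ v) (List.append_right_injective u).injOn
  rw [Measure.map_apply measurable_glue (hmeas s β)]
  have hset : glue ⁻¹' {ω : List A → Bool | ∀ w ∈ s, ω w = β w} =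
      {b : Bool | [] ∈ s → b = β []} ×ˢ
        Set.pi Set.univ (fun a => {ξ : List A → Bool | ∀ v ∈ c [a] s, ξ v = β (a :: v)}) := by
    ext ⟨b, ξ⟩
    simp only [Set.mem_preimage, Set.mem_ofPred_eq, Set.mem_prod, Set.mem_pi, Set.mem_univ,
      true_implies, c, Finset.mem_preimage, List.singleton_append]
    constructor
    · intro h
      exact ⟨fun hs => h [] hs, fun a v hv => h (a :: v) hv⟩
    · rintro ⟨h1, h2⟩ w hw
      cases w with
      | nil => exact h1 hw
      | cons a v => exact h2 a v hw
  rw [hset, Measure.prod_prod, Measure.pi_pi, hP]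
  simp only [hP _ (fun v => β (_ :: v))]
  rw [← Finset.prod_fiberwise s List.head?, Fintype.prod_option]
  congr 1
  · rw [Measure.map_apply hroot (Set.toFinite _).measurableSet]
    have : s.filter (fun w => w.head? = none) = s.filter (fun w => w = []) := by
      simp [List.head?_eq_none_iff]
    rw [this]
    have h2 := hP (s.filter (fun w => w = [])) β
    rw [← h2]
    congr 1
    ext ω
    simp only [Set.mem_preimage, Set.mem_ofPred_eq, Finset.mem_filter]
    constructor
    · rintro h w ⟨hw, rfl⟩; exact h hw
    · intro h hs; exact h [] ⟨hs, rfl⟩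
  · refine Finset.prod_congr rfl fun a _ => ?_
    refine Finset.prod_bij (fun v _ => a :: v) ?_ ?_ ?_ ?_
    · intro v hv
      simpa [c] using hv
    · intro v _ v' _ h
      simpa using h
    · intro w hw
      rw [Finset.mem_filter] at hw
      cases w with
      | nil => simp at hw
      | cons b v =>
        obtain rfl : b = a := by simpa using hw.2
        exact ⟨v, by simpa [c] using hw.1, rfl⟩
    · intro v _
      rfl

end Branching

section Probability

variable {A : Type*} [Fintype A] {p : ℝ} {P : Measure (List A → Bool)} [IsProbabilityMeasure P]

lemma prob_root (hp : 0 ≤ p)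
    (hP : ∀ (s : Finset (List A)) (β : List A → Bool),
      P {ω | ∀ w ∈ s, ω w = β w} =
        ∏ w ∈ s, if β w then ENNReal.ofReal p else ENNReal.ofReal (1 - p))
    (B : Set (List A → Bool)) (hB : MeasurableSet B) (hfree : RootFree B) :
    P.real {ω | ω [] = true ∧ ω ∈ B} = p * P.real B := by
  have hroot : Measurable fun ω : List A → Bool => ω [] := measurable_pi_apply _
  have : IsProbabilityMeasure (P.map fun ω => ω []) :=
    Measure.isProbabilityMeasure_map hroot.aemeasurable
  set R := (P.map fun ω => ω []).prod (Measure.pi fun _ : A => P)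
  have hg : R.map glue = P := map_glue hP
  have hm : MeasurableSet {ω : List A → Bool | ω [] = true ∧ ω ∈ B} :=
    (measurableSet_coord []).inter hB
  have hcongr : ∀ (b b' : Bool) (ξ : A → List A → Bool), glue (b, ξ) ∈ B → glue (b', ξ) ∈ B := by
    intro b b' ξ h
    refine hfree _ _ ?_ h
    intro w hw
    cases w with
    | nil => exact absurd rfl hw
    | cons a v => rfl
  have h1 : glue ⁻¹' {ω : List A → Bool | ω [] = true ∧ ω ∈ B} =
      {true} ×ˢ {ξ | glue (true, ξ) ∈ B} := by
    ext ⟨b, ξ⟩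
    cases b <;> simp [glue]
  have h2 : glue ⁻¹' B = Set.univ ×ˢ {ξ : A → List A → Bool | glue (true, ξ) ∈ B} := by
    ext ⟨b, ξ⟩
    simp only [Set.mem_preimage, Set.mem_prod, Set.mem_univ, true_and]
    exact ⟨hcongr b true ξ, hcongr true b ξ⟩
  have hp' : (P.map fun ω => ω []) {true} = ENNReal.ofReal p := by
    rw [Measure.map_apply hroot (measurableSet_singleton true)]
    have := hP {[]} (fun _ => true)
    simpa [Set.preimage] using this
  have e1 : P {ω | ω [] = true ∧ ω ∈ B} = ENNReal.ofReal p * P B := by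
    conv_lhs => rw [← hg]
    conv_rhs => rw [← hg]
    rw [Measure.map_apply measurable_glue hm, Measure.map_apply measurable_glue hB, h1, h2,
      Measure.prod_prod, Measure.prod_prod, hp', measure_univ, one_mul]
  simp [Measure.real, e1, ENNReal.toReal_mul, ENNReal.toReal_ofReal hp]

lemma prob_all_sub
    (hP : ∀ (s : Finset (List A)) (β : List A → Bool),
      P {ω | ∀ w ∈ s, ω w = β w} =
        ∏ w ∈ s, if β w then ENNReal.ofReal p else ENNReal.ofReal (1 - p))
    (C : Set (List A → Bool)) (hC : MeasurableSet C) :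
    P.real {ω | ∀ a, subTree [a] ω ∈ C} = P.real C ^ Fintype.card A := by
  have hroot : Measurable fun ω : List A → Bool => ω [] := measurable_pi_apply _
  have : IsProbabilityMeasure (P.map fun ω => ω []) :=
    Measure.isProbabilityMeasure_map hroot.aemeasurable
  set R := (P.map fun ω => ω []).prod (Measure.pi fun _ : A => P)
  have hg : R.map glue = P := map_glue hP
  have hm : MeasurableSet {ω : List A → Bool | ∀ a, subTree [a] ω ∈ C} := by
    simp only [Set.ofPred_forall]
    exact MeasurableSet.iInter fun a => measurable_subTree [a] hC
  have h1 : glue ⁻¹' {ω : List A → Bool | ∀ a, subTree [a] ω ∈ C} =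
      Set.univ ×ˢ Set.pi Set.univ (fun _ => C) := by
    ext ⟨b, ξ⟩
    simp only [Set.mem_preimage, Set.mem_ofPred_eq, Set.mem_prod, Set.mem_univ, true_and,
      Set.mem_pi, true_implies]
    rfl
  have e1 : P {ω | ∀ a, subTree [a] ω ∈ C} = P C ^ Fintype.card A := by
    conv_lhs => rw [← hg]
    rw [Measure.map_apply measurable_glue hm, h1, Measure.prod_prod, Measure.pi_pi,
      measure_univ, one_mul, Finset.prod_const, Finset.card_univ]
  simp [Measure.real, e1, ENNReal.toReal_pow]

/-- The probability that no child of the root is retained with a subtree in `B`. -/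
lemma prob_no_child (hp : 0 ≤ p)
    (hP : ∀ (s : Finset (List A)) (β : List A → Bool),
      P {ω | ∀ w ∈ s, ω w = β w} =
        ∏ w ∈ s, if β w then ENNReal.ofReal p else ENNReal.ofReal (1 - p))
    (B : Set (List A → Bool)) (hB : MeasurableSet B) (hfree : RootFree B) :
    P.real {ω | ∃ a, ω [a] = true ∧ subTree [a] ω ∈ B}ᶜ =
      (1 - p * P.real B) ^ Fintype.card A := by
  have hm : MeasurableSet {ω : List A → Bool | ω [] = true ∧ ω ∈ B} :=
    (measurableSet_coord []).inter hB
  rw [← prob_root hp hP B hB hfree, ← probReal_compl_eq_one_sub hm,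
    ← prob_all_sub hP _ hm.compl]
  congr 1
  ext ω
  simp [subTree]

lemma prob_survTo_succ (hp : 0 ≤ p)
    (hP : ∀ (s : Finset (List A)) (β : List A → Bool),
      P {ω | ∀ w ∈ s, ω w = β w} =
        ∏ w ∈ s, if β w then ENNReal.ofReal p else ENNReal.ofReal (1 - p)) (k : ℕ) :
    1 - P.real {ω | SurvTo (k + 1) ω} =
      (1 - p * P.real {ω | SurvTo k ω}) ^ Fintype.card A := by
  rw [← prob_no_child hp hP _ (measurableSet_survTo k) (rootFree_survTo k),
    ← probReal_compl_eq_one_sub (measurableSet_survTo _)]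
  congr 2
  ext ω
  exact survTo_succ k ω

/-- The value `(Np - 1) / (Np)`, which is positive in the supercritical case, stays below the
survival probability to every level because `(1 - x) ^ N ≤ 1 / (1 + N x)`. -/
lemma prob_survTo_ge (hp : 0 < p) (hp1 : p < 1) (hN : 1 < Fintype.card A * p)
    (hP : ∀ (s : Finset (List A)) (β : List A → Bool),
      P {ω | ∀ w ∈ s, ω w = β w} =
        ∏ w ∈ s, if β w then ENNReal.ofReal p else ENNReal.ofReal (1 - p)) (k : ℕ) :
    (Fintype.card A * p - 1) / (Fintype.card A * p) ≤ P.real {ω | SurvTo k ω} := by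
  set M : ℝ := Fintype.card A * p
  have hM : 0 < M := by linarith
  set ε : ℝ := (M - 1) / M with hε
  have hε0 : 0 < ε := div_pos (by linarith) hM
  have hε1 : ε < 1 := by rw [hε, div_lt_one hM]; linarith
  induction k with
  | zero =>
    have : {ω : List A → Bool | SurvTo 0 ω} = Set.univ := by
      ext ω
      simp only [Set.mem_ofPred_eq, Set.mem_univ, iff_true]
      exact ⟨[], rfl, retained_nil ω⟩
    rw [this, probReal_univ]
    exact hε1.le
  | succ k ih =>
    have hle : P.real {ω | SurvTo k ω} ≤ 1 := measureReal_le_one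
    have h := prob_survTo_succ hp.le hP k
    have h1 : (1 - p * P.real {ω | SurvTo k ω}) ^ Fintype.card A ≤
        (1 - p * ε) ^ Fintype.card A := by
      apply pow_le_pow_left₀
      · nlinarith
      · nlinarith
    have h2 : (1 - p * ε) ^ Fintype.card A * (1 + M * ε) ≤ 1 := by
      have hb : 1 + M * ε ≤ (1 + p * ε) ^ Fintype.card A := by
        have := one_add_mul_le_pow (a := p * ε) (by nlinarith) (Fintype.card A)
        simpa [M, mul_assoc] using this
      have hpε : p * ε < 1 := by nlinarith
      have hpε0 : 0 < p * ε := by positivity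
      calc _ ≤ (1 - p * ε) ^ Fintype.card A * (1 + p * ε) ^ Fintype.card A := by
            apply mul_le_mul_of_nonneg_left hb
            apply pow_nonneg
            linarith
        _ = ((1 - p * ε) * (1 + p * ε)) ^ Fintype.card A := by rw [mul_pow]
        _ ≤ 1 := pow_le_one₀ (by nlinarith) (by nlinarith)
    have h3 : (1 - ε) * (1 + M * ε) = 1 := by
      rw [hε]; field_simp; ring
    have h4 : (1 - p * ε) ^ Fintype.card A ≤ 1 - ε := by
      have : 0 < 1 + M * ε := by positivity
      by_contra! hc
      nlinarith
    linarith

lemma tendsto_survTo (P : Measure (List A → Bool)) [IsProbabilityMeasure P] :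
    Tendsto (fun k => P.real {ω | SurvTo k ω}) atTop (𝓝 (P.real {ω | Surv ω})) := by
  have h := tendsto_measure_iInter_atTop (μ := P) (s := fun k => {ω : List A → Bool | SurvTo k ω})
    (fun k => (measurableSet_survTo k).nullMeasurableSet)
    (fun j k hjk ω h => survTo_antitone hjk h) ⟨0, measure_ne_top _ _⟩
  have e : (⋂ k, {ω : List A → Bool | SurvTo k ω}) = {ω | Surv ω} := by
    ext ω; simp [Surv]
  rw [e] at h
  exact (ENNReal.tendsto_toReal (measure_ne_top _ _)).comp h

lemma prob_surv_pos (hp : 0 < p) (hp1 : p < 1) (hN : 1 < Fintype.card A * p)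
    (hP : ∀ (s : Finset (List A)) (β : List A → Bool),
      P {ω | ∀ w ∈ s, ω w = β w} =
        ∏ w ∈ s, if β w then ENNReal.ofReal p else ENNReal.ofReal (1 - p)) :
    0 < P.real {ω | Surv ω} :=
  lt_of_lt_of_le (div_pos (by linarith) (by linarith))
    (ge_of_tendsto' (tendsto_survTo P) (prob_survTo_ge hp hp1 hN hP))

lemma prob_surv_eq (hp : 0 ≤ p)
    (hP : ∀ (s : Finset (List A)) (β : List A → Bool),
      P {ω | ∀ w ∈ s, ω w = β w} =
        ∏ w ∈ s, if β w then ENNReal.ofReal p else ENNReal.ofReal (1 - p)) :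
    1 - P.real {ω | Surv ω} = (1 - p * P.real {ω | Surv ω}) ^ Fintype.card A := by
  have h := tendsto_survTo P
  have h1 := ((tendsto_add_atTop_iff_nat 1).2 h).const_sub 1
  have h2 := ((h.const_mul p).const_sub 1).pow (Fintype.card A)
  refine tendsto_nhds_unique h1 (h2.congr fun k => ?_)
  exact (prob_survTo_succ hp hP k).symm

lemma prob_full_pos [Nonempty A] (hp : 0 < p)
    (hP : ∀ (s : Finset (List A)) (β : List A → Bool),
      P {ω | ∀ w ∈ s, ω w = β w} =
        ∏ w ∈ s, if β w then ENNReal.ofReal p else ENNReal.ofReal (1 - p))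
    (hs : 0 < P.real {ω | Surv ω}) (z : A) (m : ℕ) : 0 < P.real {ω | Full z m ω} := by
  have key : ∀ B : Set (List A → Bool), MeasurableSet B → RootFree B → 0 < P.real B →
      0 < P.real {ω | ∀ a, ω [a] = true ∧ subTree [a] ω ∈ B} := by
    intro B hB hf hpos
    have := prob_all_sub hP {ω | ω [] = true ∧ ω ∈ B} ((measurableSet_coord []).inter hB)
    rw [prob_root hp.le hP B hB hf] at this
    have e : {ω : List A → Bool | ∀ a, subTree [a] ω ∈ {ω : List A → Bool | ω [] = true ∧ ω ∈ B}}
        = {ω | ∀ a, ω [a] = true ∧ subTree [a] ω ∈ B} := by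
      ext ω; simp [subTree]
    rw [← e, this]
    positivity
  induction m with
  | zero =>
    refine (key _ measurableSet_surv rootFree_surv hs).trans_le (measureReal_mono ?_)
    intro ω h
    exact h z
  | succ m ih => exact key _ (measurableSet_full z m) (rootFree_full z m) ih

/-- Almost every surviving tree is good. With `u` and `t` the probabilities of survival and of
goodness, `1 - u = (1 - p u) ^ N`, while `1 - t ≤ (1 - p t) ^ N` since goodness passes from a
retained child to its parent. Strict convexity of the power forces `t = u`. -/
lemma prob_surv_not_good (hp : 0 < p) (hp1 : p < 1) (hN2 : 2 ≤ Fintype.card A)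
    (hN : 1 < Fintype.card A * p)
    (hP : ∀ (s : Finset (List A)) (β : List A → Bool),
      P {ω | ∀ w ∈ s, ω w = β w} =
        ∏ w ∈ s, if β w then ENNReal.ofReal p else ENNReal.ofReal (1 - p))
    (z : A) (m : ℕ) : P {ω | Surv ω ∧ ¬ Good z m ω} = 0 := by
  have : Nonempty A := ⟨z⟩
  have hu := prob_surv_pos hp hp1 hN hP
  have hueq := prob_surv_eq hp.le hP
  have hu1 : P.real {ω | Surv ω} ≤ 1 := measureReal_le_one
  have hsub : {ω : List A → Bool | Good z m ω} ⊆ {ω | Surv ω} := fun ω h => h.1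
  have htu : P.real {ω | Good z m ω} ≤ P.real {ω | Surv ω} := measureReal_mono hsub
  have ht : 0 < P.real {ω | Good z m ω} := by
    refine (prob_full_pos hp hP hu z m).trans_le (measureReal_mono ?_)
    intro ω h
    refine ⟨Full.surv h, [], retained_nil ω, ?_⟩
    have e : subTree [] ω = ω := by funext u; simp [subTree]
    rw [e]
    exact h
  have htle : 1 - P.real {ω | Good z m ω} ≤
      (1 - p * P.real {ω | Good z m ω}) ^ Fintype.card A := by
    rw [← prob_no_child hp.le hP _ (measurableSet_good z m) (rootFree_good z m),
      ← probReal_compl_eq_one_sub (measurableSet_good z m)]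
    refine measureReal_mono ?_
    intro ω h
    rintro ⟨a, ha, hg⟩
    exact h (good_of_sub z m ω a ha hg)
  have hEq : P.real {ω | Good z m ω} = P.real {ω | Surv ω} := by
    by_contra hne
    set t := P.real {ω | Good z m ω}
    set u := P.real {ω | Surv ω}
    have hlt : t < u := lt_of_le_of_ne htu hne
    have hc := (strictConvexOn_pow hN2).2
      (show 1 - p * u ∈ Set.Ici (0 : ℝ) by simp only [Set.mem_Ici]; nlinarith)
      (show (1 : ℝ) ∈ Set.Ici (0 : ℝ) by simp) (by nlinarith)
      (show 0 < t / u by positivity)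
      (show 0 < 1 - t / u by rw [sub_pos, div_lt_one hu]; exact hlt) (by ring)
    have e1 : (t / u) • (1 - p * u) + (1 - t / u) • (1 : ℝ) = 1 - p * t := by
      simp only [smul_eq_mul]; field_simp; ring
    rw [e1] at hc
    beta_reduce at hc
    rw [← hueq] at hc
    have e2 : (t / u) • (1 - u) + (1 - t / u) • (1 : ℝ) ^ Fintype.card A = 1 - t := by
      simp only [smul_eq_mul, one_pow]; field_simp; ring
    rw [e2] at hc
    linarith
  have hd := measure_sdiff hsub (measurableSet_good z m).nullMeasurableSet
    (measure_ne_top P {ω | Good z m ω})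
  have hE : P {ω | Good z m ω} = P {ω | Surv ω} := by
    rwa [Measure.real, Measure.real, ENNReal.toReal_eq_toReal_iff' (measure_ne_top _ _)
      (measure_ne_top _ _)] at hEq
  rw [hE, tsub_self] at hd
  exact hd

end Probability

/-! ### Geometry of the cubes -/

section Geometry

variable {n d : ℕ}

/-- The `i`-th coordinate of the lowest corner of the cube addressed by a word, by recursion on
the word. -/
noncomputable def corner (i : Fin d) : List (Fin d → Fin n) → ℝ
  | [] => 0
  | a :: w => ((a i : ℕ) + corner i w) / n

lemma corner_eq (hn : 2 ≤ n) (i : Fin d) (w : List (Fin d → Fin n)) :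
    ∑ l : Fin w.length, ((w.get l) i : ℝ) * (n : ℝ) ^ (-(l.1 : ℤ) - 1) = corner i w := by
  have hn0 : (n : ℝ) ≠ 0 := by positivity
  induction w with
  | nil => simp [corner]
  | cons a w ih =>
    rw [corner, ← ih, add_div, Finset.sum_div]
    erw [Fin.sum_univ_succ]
    congr 1
    · change ((a i : ℕ) : ℝ) * (n : ℝ) ^ (-((0 : ℕ) : ℤ) - 1) = _
      simp [div_eq_mul_inv]
    · refine Finset.sum_congr rfl fun l _ => ?_
      rw [mul_div_assoc]
      congr 1
      rw [div_eq_mul_inv, ← zpow_neg_one, ← zpow_add₀ hn0]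
      congr 1
      simp
      ring

lemma mem_percCube (hn : 2 ≤ n) (w : List (Fin d → Fin n)) (x : EuclideanSpace ℝ (Fin d)) :
    x ∈ percCube n d w ↔
      ∀ i, corner i w ≤ x i ∧ x i ≤ corner i w + ((n : ℝ) ^ w.length)⁻¹ := by
  simp only [percCube, corner_eq hn, Set.mem_ofPred_eq, Set.mem_Icc, zpow_neg, zpow_natCast]

lemma corner_append (hn : 2 ≤ n) (i : Fin d) (w v : List (Fin d → Fin n)) :
    corner i (w ++ v) = corner i w + ((n : ℝ) ^ w.length)⁻¹ * corner i v := by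
  have hn0 : (n : ℝ) ≠ 0 := by positivity
  induction w with
  | nil => simp [corner]
  | cons a w ih =>
    simp only [List.cons_append, corner, ih, List.length_cons, pow_succ]
    field_simp
    ring

lemma corner_nonneg (i : Fin d) (w : List (Fin d → Fin n)) : 0 ≤ corner i w := by
  induction w with
  | nil => simp [corner]
  | cons a w ih => simp only [corner]; positivity

lemma corner_le (hn : 2 ≤ n) (i : Fin d) (w : List (Fin d → Fin n)) :
    corner i w + ((n : ℝ) ^ w.length)⁻¹ ≤ 1 := by
  have hn0 : (0 : ℝ) < n := by positivity
  induction w with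
  | nil => simp [corner]
  | cons a w ih =>
    have ha : ((a i : ℕ) : ℝ) + 1 ≤ n := by exact_mod_cast (a i).2
    have e : corner i (a :: w) + ((n : ℝ) ^ (a :: w).length)⁻¹ =
        ((a i : ℕ) + (corner i w + ((n : ℝ) ^ w.length)⁻¹)) / n := by
      simp only [corner, List.length_cons, pow_succ]
      field_simp
      ring
    rw [e, div_le_one hn0]
    linarith

lemma percCube_append_subset (hn : 2 ≤ n) (w v : List (Fin d → Fin n)) :
    percCube n d (w ++ v) ⊆ percCube n d w := by
  intro x hx
  rw [mem_percCube hn] at hx ⊢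
  intro i
  have h := hx i
  rw [corner_append hn] at h
  have h1 := corner_nonneg i v
  have h2 := corner_le hn i v
  have h3 : (0 : ℝ) < ((n : ℝ) ^ w.length)⁻¹ := by positivity
  have e : ((n : ℝ) ^ (w ++ v).length)⁻¹ = ((n : ℝ) ^ w.length)⁻¹ * ((n : ℝ) ^ v.length)⁻¹ := by
    rw [List.length_append, pow_add, mul_inv]
  rw [e] at h
  constructor
  · nlinarith
  · nlinarith

/-- Corners of distinct cubes of the same level are a full cube side apart. -/
lemma corner_sep (hn : 2 ≤ n) (v v' : List (Fin d → Fin n)) (hl : v.length = v'.length)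
    (hne : v ≠ v') : ∃ i, ((n : ℝ) ^ v.length)⁻¹ ≤ |corner i v - corner i v'| := by
  have hn0 : (0 : ℝ) < n := by positivity
  induction v generalizing v' with
  | nil =>
    cases v' with
    | nil => exact absurd rfl hne
    | cons => simp at hl
  | cons a v ih =>
    cases v' with
    | nil => simp at hl
    | cons a' v' =>
      have hl' : v.length = v'.length := by simpa using hl
      have e : ∀ i, |corner i (a :: v) - corner i (a' :: v')| =
          |((a i : ℕ) : ℝ) - ((a' i : ℕ) : ℝ) + (corner i v - corner i v')| / n := by
        intro i
        have h : corner i (a :: v) - corner i (a' :: v') =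
            (((a i : ℕ) : ℝ) - ((a' i : ℕ) : ℝ) + (corner i v - corner i v')) / n := by
          simp only [corner]
          ring
        rw [h, abs_div, abs_of_pos hn0]
      have e2 : ((n : ℝ) ^ (a :: v).length)⁻¹ = ((n : ℝ) ^ v.length)⁻¹ / n := by
        simp only [List.length_cons, pow_succ]
        field_simp
      simp only [e, e2, div_le_div_iff_of_pos_right hn0]
      by_cases haa : a = a'
      · subst haa
        obtain ⟨i, hi⟩ := ih v' hl' (fun h => hne (by rw [h]))
        exact ⟨i, by simpa using hi⟩
      · obtain ⟨i, hi⟩ := Function.ne_iff.1 haa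
        refine ⟨i, ?_⟩
        have h1 := corner_nonneg i v
        have h2 := corner_le hn i v
        have h3 := corner_nonneg i v'
        have h4 := corner_le hn i v'
        rw [← hl'] at h4
        have hi' : (a i : ℕ) ≠ (a' i : ℕ) := fun h => hi (Fin.ext h)
        rcases lt_or_gt_of_ne hi' with h | h
        · have : ((a i : ℕ) : ℝ) + 1 ≤ (a' i : ℕ) := by exact_mod_cast h
          refine le_trans ?_ (neg_le_abs _)
          linarith
        · have : ((a' i : ℕ) : ℝ) + 1 ≤ (a i : ℕ) := by exact_mod_cast h
          refine le_trans ?_ (le_abs_self _)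
          linarith

lemma isCompact_percCube (hn : 2 ≤ n) (w : List (Fin d → Fin n)) :
    IsCompact (percCube n d w) := by
  have hpi : IsCompact (Set.pi Set.univ fun i : Fin d =>
      Set.Icc (corner i w) (corner i w + ((n : ℝ) ^ w.length)⁻¹)) :=
    isCompact_univ_pi fun i => isCompact_Icc
  have e : percCube n d w = (EuclideanSpace.equiv (Fin d) ℝ).toHomeomorph ⁻¹'
      (Set.pi Set.univ fun i : Fin d =>
        Set.Icc (corner i w) (corner i w + ((n : ℝ) ^ w.length)⁻¹)) := by
    ext x
    rw [mem_percCube hn]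
    simp only [Set.mem_preimage, Set.mem_pi, Set.mem_univ, true_implies, Set.mem_Icc]
    rfl
  rw [e]
  exact (Homeomorph.isCompact_preimage _).2 hpi

lemma percCube_nonempty (hn : 2 ≤ n) (w : List (Fin d → Fin n)) : (percCube n d w).Nonempty := by
  refine ⟨WithLp.toLp 2 fun i => corner i w, ?_⟩
  rw [mem_percCube hn]
  intro i
  have : (0 : ℝ) < ((n : ℝ) ^ w.length)⁻¹ := by positivity
  exact ⟨le_rfl, by simp⟩

/-- A retained cube whose subtree survives meets the limit set. -/
lemma exists_mem_percLimit (hn : 2 ≤ n) (ω : List (Fin d → Fin n) → Bool)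
    (w : List (Fin d → Fin n)) (hw : retained ω w) (hs : Surv (subTree w ω)) :
    ∃ x ∈ percLimit n d ω, x ∈ percCube n d w := by
  let K : ℕ → Set (EuclideanSpace ℝ (Fin d)) := fun k =>
    ⋃ v ∈ {v : List (Fin d → Fin n) | v.length = k ∧ retained (subTree w ω) v},
      percCube n d (w ++ v)
  have hfin : ∀ k,
      {v : List (Fin d → Fin n) | v.length = k ∧ retained (subTree w ω) v}.Finite := fun k =>
    (List.finite_length_eq (Fin d → Fin n) k).subset fun v hv => hv.1
  have hcomp : ∀ k, IsCompact (K k) := fun k =>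
    (hfin k).isCompact_biUnion fun v _ => isCompact_percCube hn _
  have hne : ∀ k, (K k).Nonempty := by
    intro k
    obtain ⟨v, hv, hr⟩ := hs k
    obtain ⟨x, hx⟩ := percCube_nonempty hn (w ++ v)
    exact ⟨x, Set.mem_iUnion₂.2 ⟨v, ⟨hv, hr⟩, hx⟩⟩
  have hanti : ∀ k, K (k + 1) ⊆ K k := by
    intro k x hx
    obtain ⟨v, ⟨hv, hr⟩, hx⟩ := Set.mem_iUnion₂.1 hx
    refine Set.mem_iUnion₂.2 ⟨v.take k, ⟨by simp [hv], retained_take hr k⟩, ?_⟩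
    refine percCube_append_subset hn _ (v.drop k) ?_
    simpa using hx
  obtain ⟨x, hx⟩ := IsCompact.nonempty_iInter_of_sequence_nonempty_isCompact_isClosed K hanti hne
    (hcomp 0) (fun k => (hcomp k).isClosed)
  rw [Set.mem_iInter] at hx
  refine ⟨x, ?_, ?_⟩
  · refine Set.mem_iInter.2 fun k => ?_
    obtain ⟨v, ⟨hv, hr⟩, hxv⟩ := Set.mem_iUnion₂.1 (hx k)
    have hret : retained ω (w ++ v) := (retained_append ω w v).2 ⟨hw, hr⟩
    refine Set.mem_iUnion.2 ⟨⟨(w ++ v).take k, by simp [hv], retained_take hret k⟩, ?_⟩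
    refine percCube_append_subset hn _ ((w ++ v).drop k) ?_
    simpa only [List.take_append_drop] using hxv
  · obtain ⟨v, ⟨hv, hr⟩, hxv⟩ := Set.mem_iUnion₂.1 (hx 0)
    exact percCube_append_subset hn _ _ hxv

lemma surv_of_percLimit_nonempty {ω : List (Fin d → Fin n) → Bool}
    (h : (percLimit n d ω).Nonempty) : Surv ω := by
  obtain ⟨x, hx⟩ := h
  intro k
  obtain ⟨w, hw⟩ := Set.mem_iUnion.1 (Set.mem_iInter.1 hx k)
  exact ⟨w.1, w.2⟩

lemma euclid_abs_le_dist {e : ℕ} (x y : EuclideanSpace ℝ (Fin e)) (i : Fin e) :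
    |x i - y i| ≤ dist x y := by
  rw [EuclideanSpace.dist_eq, ← Real.dist_eq]
  apply Real.le_sqrt_of_sq_le
  exact Finset.single_le_sum (f := fun i => dist (x i) (y i) ^ 2) (fun _ _ => sq_nonneg _)
    (Finset.mem_univ i)

lemma euclid_dist_le {e : ℕ} (x y : EuclideanSpace ℝ (Fin e)) (r : ℝ) (hr : 0 ≤ r)
    (h : ∀ i, |x i - y i| ≤ r) : dist x y ≤ e * r := by
  rw [EuclideanSpace.dist_eq]
  apply Real.sqrt_le_iff.2
  refine ⟨by positivity, ?_⟩
  calc ∑ i, dist (x i) (y i) ^ 2 ≤ ∑ _i : Fin e, r ^ 2 := by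
        refine Finset.sum_le_sum fun i _ => ?_
        rw [Real.dist_eq]
        exact pow_le_pow_left₀ (abs_nonneg _) (h i) 2
    _ = e * r ^ 2 := by simp
    _ ≤ (e * r) ^ 2 := by
        rw [mul_pow]
        refine mul_le_mul_of_nonneg_right ?_ (sq_nonneg r)
        exact_mod_cast Nat.le_self_pow two_ne_zero e

/-- A `δ`-separated family of diameter at most `D` in `ℝ^e` has at most
`(2 (e + 1) D / δ + 1) ^ e` members: a grid of side `δ / (e + 1)` separates them. -/
lemma card_le_of_separated {e : ℕ} {ι : Type*} [Fintype ι] (y : ι → EuclideanSpace ℝ (Fin e))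
    (δ D : ℝ) (hδ : 0 < δ) (hD : 0 ≤ D) (hsep : ∀ i j, i ≠ j → δ ≤ dist (y i) (y j))
    (hdiam : ∀ i j, dist (y i) (y j) ≤ D) :
    (Fintype.card ι : ℝ) ≤ (2 * (e + 1) * D / δ + 1) ^ e := by
  rcases isEmpty_or_nonempty ι with hι | ⟨⟨i₀⟩⟩
  · simp only [Fintype.card_eq_zero, Nat.cast_zero]
    positivity
  set s : ℝ := δ / (e + 1) with hs
  have hs0 : 0 < s := by positivity
  set M : ℕ := ⌊2 * D / s⌋₊ with hM
  have hlow : ∀ i c, 0 ≤ y i c - y i₀ c + D := by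
    intro i c
    have := (abs_le.1 ((euclid_abs_le_dist (y i) (y i₀) c).trans (hdiam i i₀))).1
    linarith
  have hfl : ∀ i c, ⌊(y i c - y i₀ c + D) / s⌋₊ < M + 1 := by
    intro i c
    refine Nat.lt_succ_of_le (Nat.floor_le_floor ?_)
    have := (abs_le.1 ((euclid_abs_le_dist (y i) (y i₀) c).trans (hdiam i i₀))).2
    exact div_le_div_of_nonneg_right (by linarith) hs0.le
  let g : ι → Fin e → Fin (M + 1) := fun i c => ⟨⌊(y i c - y i₀ c + D) / s⌋₊, hfl i c⟩
  have hinj : Function.Injective g := by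
    intro i j hij
    by_contra hne
    have hc : ∀ c, |y i c - y j c| ≤ s := by
      intro c
      have h1 : ⌊(y i c - y i₀ c + D) / s⌋₊ = ⌊(y j c - y i₀ c + D) / s⌋₊ :=
        congrArg Fin.val (congrFun hij c)
      have a1 := Nat.floor_le (div_nonneg (hlow i c) hs0.le)
      have a2 := Nat.lt_floor_add_one ((y i c - y i₀ c + D) / s)
      have b1 := Nat.floor_le (div_nonneg (hlow j c) hs0.le)
      have b2 := Nat.lt_floor_add_one ((y j c - y i₀ c + D) / s)
      rw [h1] at a1 a2
      have h3 : |(y i c - y i₀ c + D) / s - (y j c - y i₀ c + D) / s| ≤ 1 := by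
        rw [abs_le]
        constructor <;> linarith
      rw [← sub_div, abs_div, abs_of_pos hs0, div_le_one hs0] at h3
      have h4 : y i c - y i₀ c + D - (y j c - y i₀ c + D) = y i c - y j c := by ring
      rwa [h4] at h3
    have h4 := euclid_dist_le (y i) (y j) s hs0.le hc
    have h5 := hsep i j hne
    have h6 : (e : ℝ) * s + s = δ := by rw [hs]; field_simp
    linarith
  have hcard := Fintype.card_le_of_injective g hinj
  rw [Fintype.card_fun, Fintype.card_fin, Fintype.card_fin] at hcard
  calc (Fintype.card ι : ℝ) ≤ ((M + 1 : ℕ) : ℝ) ^ e := by exact_mod_cast hcard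
    _ ≤ (2 * (e + 1) * D / δ + 1) ^ e := by
      refine pow_le_pow_left₀ (by positivity) ?_ e
      push_cast
      have : (M : ℝ) ≤ 2 * D / s := Nat.floor_le (by positivity)
      have e2 : 2 * D / s = 2 * (e + 1) * D / δ := by rw [hs]; field_simp
      linarith

/-- A percolation containing full patterns of every depth has a limit set without bi-Lipschitz
embedding: at depth `m` the pattern supplies `n ^ ((e+1) m)` points at mutual distances
between `r n ^ (-m-1)` and `(e+1) r`, where `r` is the side of the ambient cube, and `ℝ^e` has
room only for `O(n ^ (e m))` such points. -/
lemma no_embedding_of_good {e : ℕ} (hn : 2 ≤ n) (z : Fin (e + 1) → Fin n)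
    (hz : ∀ i, (z i : ℕ) = 0)
    (ω : List (Fin (e + 1) → Fin n) → Bool) (hgood : ∀ m, Good z m ω)
    (φ : EuclideanSpace ℝ (Fin (e + 1)) → EuclideanSpace ℝ (Fin e)) (a b : ℝ) (ha : 0 < a)
    (hab : a ≤ b)
    (hφ : ∀ x ∈ percLimit n (e + 1) ω, ∀ y ∈ percLimit n (e + 1) ω,
      a * dist x y ≤ dist (φ x) (φ y) ∧ dist (φ x) (φ y) ≤ b * dist x y) : False := by
  have hb : 0 < b := ha.trans_le hab
  have hn0 : (0 : ℝ) < n := by positivity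
  have hn2 : (2 : ℝ) ≤ n := by exact_mod_cast hn
  have hn1 : (1 : ℝ) < n := by linarith
  set K : ℝ := 2 * (e + 1) * (b * (e + 1)) * n / a + 1 with hK
  have hbound : ∀ m : ℕ, (n : ℝ) ^ m ≤ K ^ e := by
    intro m
    obtain ⟨-, w, hw, hf⟩ := hgood m
    set k := w.length with hk
    set r : ℝ := ((n : ℝ) ^ k)⁻¹ with hr
    have hr0 : 0 < r := by positivity
    have hpt : ∀ v : List.Vector (Fin (e + 1) → Fin n) m, ∃ x ∈ percLimit n (e + 1) ω,
        x ∈ percCube n (e + 1) (w ++ (v.1 ++ [z])) := by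
      intro v
      obtain ⟨h1, h2⟩ := hf.word v.1 v.2
      refine exists_mem_percLimit hn ω _ ((retained_append _ _ _).2 ⟨hw, h1⟩) ?_
      rwa [subTree_append]
    choose x hxF hxC using hpt
    have hz0 : ∀ i, corner i [z] = 0 := by
      intro i
      simp [corner, hz]
    have hco : ∀ (v : List.Vector (Fin (e + 1) → Fin n) m) i,
        corner i w + r * corner i v.1 ≤ x v i ∧
        x v i ≤ corner i w + r * corner i v.1 + r * ((n : ℝ) ^ (m + 1))⁻¹ := by
      intro v i
      have := (mem_percCube hn _ _).1 (hxC v) i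
      rw [corner_append hn, corner_append hn, hz0] at this
      have el : ((n : ℝ) ^ (w ++ (v.1 ++ [z])).length)⁻¹ = r * ((n : ℝ) ^ (m + 1))⁻¹ := by
        rw [List.length_append, List.length_append, v.2, pow_add, mul_inv]
        rfl
      rw [el] at this
      simpa using this
    have hdist : ∀ v v', dist (x v) (x v') ≤ (e + 1) * r := by
      intro v v'
      have := euclid_dist_le (x v) (x v') r hr0.le ?_
      · simpa using this
      · intro i
        have h1 := (mem_percCube hn _ _).1 (percCube_append_subset hn _ _ (hxC v)) i
        have h2 := (mem_percCube hn _ _).1 (percCube_append_subset hn _ _ (hxC v')) i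
        rw [abs_le]
        constructor <;> linarith [h1.1, h1.2, h2.1, h2.2]
    have hsep : ∀ v v', v ≠ v' → r * ((n : ℝ) ^ (m + 1))⁻¹ ≤ dist (x v) (x v') := by
      intro v v' hne
      obtain ⟨i, hi⟩ := corner_sep hn v.1 v'.1 (by rw [v.2, v'.2]) (fun h => hne (Subtype.ext h))
      refine le_trans ?_ (euclid_abs_le_dist (x v) (x v') i)
      rw [v.2] at hi
      have h1 := hco v i
      have h2 := hco v' i
      set q : ℝ := ((n : ℝ) ^ (m + 1))⁻¹ with hq
      have hq0 : 0 < q := by positivity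
      have e1 : ((n : ℝ) ^ m)⁻¹ = n * q := by
        rw [hq, pow_succ]; field_simp
      rw [e1] at hi
      -- the corners are `n ≥ 2` sides apart in direction `i`, and the points move by one side
      have hi2 : 2 * q ≤ |corner i v.1 - corner i v'.1| := le_trans (by nlinarith) hi
      rcases le_abs'.1 hi2 with h | h
      · refine le_trans ?_ (neg_le_abs _)
        nlinarith
      · refine le_trans ?_ (le_abs_self _)
        nlinarith
    have hcard := card_le_of_separated (fun v => φ (x v)) (a * (r * ((n : ℝ) ^ (m + 1))⁻¹))
      (b * ((e + 1) * r)) (by positivity) (by positivity)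
      (fun v v' hne => (mul_le_mul_of_nonneg_left (hsep v v' hne) ha.le).trans
        (hφ _ (hxF v) _ (hxF v')).1)
      (fun v v' => (hφ _ (hxF v) _ (hxF v')).2.trans
        (mul_le_mul_of_nonneg_left (hdist v v') hb.le))
    rw [card_vector, Fintype.card_fun, Fintype.card_fin, Fintype.card_fin] at hcard
    push_cast at hcard
    have hnm : (1 : ℝ) ≤ (n : ℝ) ^ m := one_le_pow₀ hn1.le
    have h7 : 2 * ((e : ℝ) + 1) * (b * ((e + 1) * r)) / (a * (r * ((n : ℝ) ^ (m + 1))⁻¹)) + 1 ≤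
        K * (n : ℝ) ^ m := by
      have : 2 * ((e : ℝ) + 1) * (b * ((e + 1) * r)) / (a * (r * ((n : ℝ) ^ (m + 1))⁻¹)) =
          (K - 1) * (n : ℝ) ^ m := by
        rw [hK, pow_succ]; field_simp; ring
      rw [this]
      linarith
    have h8 : ((n : ℝ) ^ (e + 1)) ^ m ≤ (K * (n : ℝ) ^ m) ^ e :=
      hcard.trans (pow_le_pow_left₀ (by positivity) h7 e)
    have h9 : ((n : ℝ) ^ (e + 1)) ^ m = (n : ℝ) ^ m * ((n : ℝ) ^ m) ^ e := by
      rw [← pow_mul, ← pow_mul, ← pow_add]; congr 1; ring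
    rw [h9, mul_pow] at h8
    exact le_of_mul_le_mul_right h8 (by positivity)
  obtain ⟨m, hm⟩ := pow_unbounded_of_one_lt (K ^ e) hn1
  exact absurd (hbound m) (not_le.2 hm)

end Geometry

/-- For fractal percolation in `[0,1]^d` with `n ≥ 2` and `p > 1/n^d`,
conditioned on the limit set `F` being nonempty, almost surely there is no bi-Lipschitz map
`φ : F → ℝ^{d-1}`. -/
theorem percolation_no_biLipschitz_embedding
    {d n : ℕ} (hd : 0 < d) (hn : 2 ≤ n) (p : ℝ) (hp1 : p < 1)
    (hp : 1 / (n : ℝ) ^ d < p)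
    (P : Measure ((List (Fin d → Fin n)) → Bool)) [IsProbabilityMeasure P]
    (hP : ∀ (s : Finset (List (Fin d → Fin n))) (β : List (Fin d → Fin n) → Bool),
      P {ω | ∀ w ∈ s, ω w = β w} =
        ∏ w ∈ s, if β w then ENNReal.ofReal p else ENNReal.ofReal (1 - p)) :
    0 < P {ω | (percLimit n d ω).Nonempty} ∧
    P {ω | (percLimit n d ω).Nonempty ∧
        ∃ φ : EuclideanSpace ℝ (Fin d) → EuclideanSpace ℝ (Fin (d - 1)), ∃ a b : ℝ,
          0 < a ∧ a ≤ b ∧ ∀ x ∈ percLimit n d ω, ∀ y ∈ percLimit n d ω,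
            a * dist x y ≤ dist (φ x) (φ y) ∧ dist (φ x) (φ y) ≤ b * dist x y} = 0 := by
  have hn0 : (0 : ℝ) < (n : ℝ) ^ d := by positivity
  have hp0 : 0 < p := lt_trans (by positivity) hp
  have hcard : Fintype.card (Fin d → Fin n) = n ^ d := by simp
  have hN : 1 < (Fintype.card (Fin d → Fin n) : ℝ) * p := by
    rw [hcard]
    push_cast
    rwa [div_lt_iff₀' hn0] at hp
  have hN2 : 2 ≤ Fintype.card (Fin d → Fin n) := by
    rw [hcard]
    exact hn.trans (Nat.le_self_pow hd.ne' n)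
  let z : Fin d → Fin n := fun _ => ⟨0, by omega⟩
  constructor
  · have h := prob_surv_pos hp0 hp1 hN hP
    rw [Measure.real, ENNReal.toReal_pos_iff] at h
    refine h.1.trans_le (measure_mono fun ω hω => ?_)
    obtain ⟨x, hx, -⟩ := exists_mem_percLimit hn ω [] (retained_nil ω) hω
    exact ⟨x, hx⟩
  · refine measure_mono_null (t := ⋃ m, {ω | Surv ω ∧ ¬ Good z m ω}) ?_
      (measure_iUnion_null fun m => prob_surv_not_good hp0 hp1 hN2 hN hP z m)
    rintro ω ⟨hne, φ, a, b, ha, hab, hφ⟩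
    by_contra hc
    simp only [Set.mem_iUnion, Set.mem_ofPred_eq, not_exists, not_and, not_not] at hc
    obtain ⟨e, rfl⟩ : ∃ e, d = e + 1 := ⟨d - 1, by omega⟩
    exact no_embedding_of_good hn z (fun _ => rfl) ω
      (fun m => hc m (surv_of_percLimit_nonempty hne)) φ a b ha hab hφ
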